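/- Let Γ be a finite connected simple graph and Γ₁ a standard subgraph of Γ. Then: (a) every cycle subgraph of Γ contained in Γ₁ is a standard subgraph of Γ; (b) every connected component of the orthogonal complement Γ₁^⊥ is a standard subgraph of Γ. -/

import Mathlib

/-!
Call a subgraph *thick* if all its vertices have degree at least two in it. On a finite graph the
iterated pruning of `L` is the largest thick subgraph of `L`: it is thick (`minDegTwo_prune`),
and a thick subgraph of `L` loses no vertex in a pruning step (`MinDegTwo.le_prune`). Hence
`orth H` is the largest thick subgraph of `Γ` that is vertex-disjoint from `H`
(`MinDegTwo.le_orth`).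

(a) If `C ⊆ Γ₁`, then `orth Γ₁` is thick and disjoint from `C`, so `orth Γ₁ ⊆ orth C`, and `orth C`
contains an edge.

(b) A component `K` of `orth Γ₁` keeps all the edges of `orth Γ₁` at its vertices, so it is thick
as well; being nonempty, it has an edge. A connected leafless `Γ₁` with an edge has no isolated
vertex and is therefore thick. As it is disjoint from `K`, it lies in `orth K`, which therefore
contains an edge.
-/

open scoped Classical

noncomputable section

namespace GraphBraid

/-- A cycle subgraph: a subgraph with at least one edge which is connected and all of whose
vertices have degree exactly two (inside the subgraph). -/
def IsCycleSubgraph {W : Type*} {G : SimpleGraph W} (H : G.Subgraph) : Prop :=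
  H.edgeSet.Nonempty ∧ H.Connected ∧ ∀ v ∈ H.verts, (H.neighborSet v).ncard = 2

/-- A subgraph is leafless when no vertex has degree one inside the subgraph. -/
def IsLeafless {W : Type*} {G : SimpleGraph W} (H : G.Subgraph) : Prop :=
  ∀ v ∈ H.verts, (H.neighborSet v).ncard ≠ 1

variable {V : Type} [Fintype V] [DecidableEq V]

/-- One pruning step: delete all vertices of degree at most one. -/
def pruneStep {Γ : SimpleGraph V} (H : Γ.Subgraph) : Γ.Subgraph :=
  H.deleteVerts {v | (H.neighborSet v).ncard ≤ 1}

/-- Iterated pruning: delete vertices of degree at most one until none remain (iterating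
`card V` times guarantees stabilization on a finite graph). -/
def prune {Γ : SimpleGraph V} (H : Γ.Subgraph) : Γ.Subgraph :=
  pruneStep^[Fintype.card V] H

/-- The orthogonal complement of a subgraph: prune the induced subgraph on the complement
of its vertex set. -/
def orth {Γ : SimpleGraph V} (H : Γ.Subgraph) : Γ.Subgraph :=
  prune ((⊤ : Γ.Subgraph).deleteVerts H.verts)

/-- A standard subgraph: connected, with at least one edge, leafless, and with nontrivial
orthogonal complement. -/
def IsStandard {Γ : SimpleGraph V} (H : Γ.Subgraph) : Prop :=
  H.Connected ∧ H.edgeSet.Nonempty ∧ IsLeafless H ∧ (orth H).edgeSet.Nonempty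

/-- A maximally standard subgraph: standard, with standard orthogonal complement, and equal
to its double orthogonal complement. -/
def IsMaxStandard {Γ : SimpleGraph V} (H : Γ.Subgraph) : Prop :=
  IsStandard H ∧ IsStandard (orth H) ∧ orth (orth H) = H

/-- `K` is a connected component of `H`: a maximal connected subgraph of `H`. -/
def IsComponentOf {Γ : SimpleGraph V} (K H : Γ.Subgraph) : Prop :=
  K ≤ H ∧ K.Connected ∧ ∀ K' : Γ.Subgraph, K ≤ K' → K' ≤ H → K'.Connected → K' = K

/-- Two vertex-disjoint subgraphs are separable if they are contained in a pair of
vertex-disjoint leafless subgraphs. -/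
def Separable {Γ : SimpleGraph V} (Λ₁ Λ₂ : Γ.Subgraph) : Prop :=
  ∃ G₁ G₂ : Γ.Subgraph, IsLeafless G₁ ∧ IsLeafless G₂ ∧ Disjoint G₁.verts G₂.verts ∧
    Λ₁ ≤ G₁ ∧ Λ₂ ≤ G₂

/-- The curve graph `C(Γ)`: vertices are the cycle subgraphs which are standard, adjacent
when distinct and vertex-disjoint. -/
def curveGraph (Γ : SimpleGraph V) :
    SimpleGraph {H : Γ.Subgraph // IsCycleSubgraph H ∧ IsStandard H} :=
  SimpleGraph.fromRel fun H K => Disjoint H.1.verts K.1.verts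

/-- The graph `S(Γ)` of standard subgraphs: `Γ₁`, `Γ₂` are adjacent when they are distinct
and `Γ₁ ⊆ Γ₂ ∪ Γ₂^⊥` or `Γ₂ ⊆ Γ₁ ∪ Γ₁^⊥`. -/
def standardGraph (Γ : SimpleGraph V) :
    SimpleGraph {H : Γ.Subgraph // IsStandard H} :=
  SimpleGraph.fromRel fun H K => H.1 ≤ K.1 ⊔ orth K.1 ∨ K.1 ≤ H.1 ⊔ orth H.1

/-- The graph `M(Γ)`: the subgraph of `S(Γ)` induced on the maximally standard
subgraphs. -/
def maxStandardGraph (Γ : SimpleGraph V) :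
    SimpleGraph {H : {H : Γ.Subgraph // IsStandard H} // IsMaxStandard H.1} :=
  (standardGraph Γ).induce {H : {H : Γ.Subgraph // IsStandard H} | IsMaxStandard H.1}

/-- A thick subgraph: every vertex has degree at least two inside it. The empty subgraph counts. -/
def MinDegTwo {Γ : SimpleGraph V} (H : Γ.Subgraph) : Prop :=
  ∀ v ∈ H.verts, 2 ≤ (H.neighborSet v).ncard

/-- Degrees only grow from a subgraph to a larger one, so no vertex of a thick subgraph of `L` is
deleted by a pruning step. -/
lemma MinDegTwo.le_pruneStep {Γ : SimpleGraph V} {H L : Γ.Subgraph} (hH : MinDegTwo H)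
    (hle : H ≤ L) : H ≤ pruneStep L := by
  have key : ∀ v ∈ H.verts, ¬ (L.neighborSet v).ncard ≤ 1 := by
    intro v hv
    have h1 := hH v hv
    have h2 : (H.neighborSet v).ncard ≤ (L.neighborSet v).ncard :=
      Set.ncard_le_ncard (SimpleGraph.Subgraph.neighborSet_subset_of_subgraph hle v)
        (Set.toFinite _)
    omega
  refine ⟨fun v hv => ⟨hle.1 hv, key v hv⟩, fun v w hvw => ?_⟩
  exact SimpleGraph.Subgraph.deleteVerts_adj.2
    ⟨hle.1 hvw.fst_mem, key v hvw.fst_mem, hle.1 hvw.snd_mem, key w hvw.snd_mem, hle.2 hvw⟩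

lemma MinDegTwo.le_prune {Γ : SimpleGraph V} {H L : Γ.Subgraph} (hH : MinDegTwo H)
    (hle : H ≤ L) : H ≤ prune L := by
  unfold prune
  generalize Fintype.card V = n
  induction n generalizing L with
  | zero => exact hle
  | succ n ih => exact ih (hH.le_pruneStep hle)

lemma pruneStep_le {Γ : SimpleGraph V} (L : Γ.Subgraph) : pruneStep L ≤ L :=
  SimpleGraph.Subgraph.deleteVerts_le

lemma prune_le {Γ : SimpleGraph V} (L : Γ.Subgraph) : prune L ≤ L := by
  unfold prune
  generalize Fintype.card V = n
  induction n generalizing L with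
  | zero => exact le_rfl
  | succ n ih => exact (ih _).trans (pruneStep_le L)

/-- Pruning has stabilized after as many steps as there are vertices: a step either changes
nothing, because all degrees are already at least two, or removes a vertex. -/
lemma minDegTwo_iterate {Γ : SimpleGraph V} (n : ℕ) (L : Γ.Subgraph)
    (hL : L.verts.ncard ≤ n) : MinDegTwo (pruneStep^[n] L) := by
  induction n generalizing L with
  | zero =>
    have h0 : L.verts = ∅ := (Set.ncard_eq_zero (Set.toFinite _)).1 (Nat.le_zero.1 hL)
    intro v hv
    rw [Function.iterate_zero, id, h0] at hv
    exact hv.elim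
  | succ n ih =>
    by_cases h : MinDegTwo L
    · have hfix : pruneStep L = L := le_antisymm (pruneStep_le L) (h.le_pruneStep le_rfl)
      rw [Function.iterate_fixed hfix]
      exact h
    · rw [Function.iterate_succ_apply]
      apply ih
      unfold MinDegTwo at h
      push Not at h
      obtain ⟨v, hv, hlt⟩ := h
      have hss : (pruneStep L).verts ⊂ L.verts := by
        refine ⟨(pruneStep_le L).1, fun hsub => (hsub hv).2 ?_⟩
        exact Nat.lt_succ_iff.1 hlt
      have := Set.ncard_lt_ncard hss (Set.toFinite _)
      omega

lemma minDegTwo_prune {Γ : SimpleGraph V} (L : Γ.Subgraph) : MinDegTwo (prune L) := by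
  apply minDegTwo_iterate
  rw [← Nat.card_eq_fintype_card]
  exact Set.ncard_le_card _

lemma disjoint_orth {Γ : SimpleGraph V} (H : Γ.Subgraph) :
    Disjoint H.verts (orth H).verts :=
  Set.disjoint_right.2 fun _ hv => ((prune_le _).1 hv).2

lemma MinDegTwo.le_orth {Γ : SimpleGraph V} {H L : Γ.Subgraph} (hH : MinDegTwo H)
    (hd : Disjoint L.verts H.verts) : H ≤ orth L := by
  have hn : ∀ v ∈ H.verts, v ∉ L.verts := fun v hv => Set.disjoint_right.1 hd hv
  refine hH.le_prune ⟨fun v hv => ⟨trivial, hn v hv⟩, fun v w hvw => ?_⟩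
  exact SimpleGraph.Subgraph.deleteVerts_adj.2
    ⟨trivial, hn v hvw.fst_mem, trivial, hn w hvw.snd_mem, hvw.adj_sub⟩

lemma edgeSet_nonempty_mono {Γ : SimpleGraph V} {H L : Γ.Subgraph} (hle : H ≤ L)
    (h : H.edgeSet.Nonempty) : L.edgeSet.Nonempty :=
  h.mono (SimpleGraph.Subgraph.edgeSet_mono hle)

lemma MinDegTwo.isLeafless {Γ : SimpleGraph V} {H : Γ.Subgraph} (hH : MinDegTwo H) :
    IsLeafless H := fun v hv h => by
  have := hH v hv
  omega

lemma MinDegTwo.edgeSet_nonempty {Γ : SimpleGraph V} {H : Γ.Subgraph} (hH : MinDegTwo H)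
    (hne : H.verts.Nonempty) : H.edgeSet.Nonempty := by
  obtain ⟨v, hv⟩ := hne
  have h2 := hH v hv
  obtain ⟨w, hw⟩ : (H.neighborSet v).Nonempty := Set.nonempty_of_ncard_ne_zero (by omega)
  exact ⟨s(v, w), hw⟩

/-- Connectedness excludes degree zero once there is an edge, and leaflessness excludes degree
one. -/
lemma minDegTwo_of_connected {Γ : SimpleGraph V} {H : Γ.Subgraph} (hc : H.Connected)
    (he : H.edgeSet.Nonempty) (hl : IsLeafless H) : MinDegTwo H := by
  obtain ⟨e, he⟩ := he
  induction e using Sym2.ind with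
  | _ a b =>
    have hab : H.Adj a b := he
    have hnt : Nontrivial H.verts :=
      ⟨⟨a, hab.fst_mem⟩, ⟨b, hab.snd_mem⟩, fun h => hab.ne (congrArg Subtype.val h)⟩
    intro v hv
    obtain ⟨u, hu⟩ := hc.preconnected.exists_adj_of_nontrivial ⟨v, hv⟩
    have h0 : (H.neighborSet v).ncard ≠ 0 := Set.ncard_ne_zero_of_mem hu (Set.toFinite _)
    have h1 := hl v hv
    omega

/-- A component contains every edge of the ambient subgraph at its vertices: adjoining such an
edge keeps it connected, so maximality applies. -/
lemma IsComponentOf.adj {Γ : SimpleGraph V} {K H : Γ.Subgraph} (hK : IsComponentOf K H)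
    {v w : V} (hv : v ∈ K.verts) (hvw : H.Adj v w) : K.Adj v w := by
  obtain ⟨hle, hc, hmax⟩ := hK
  have hE := SimpleGraph.Subgraph.subgraphOfAdj_connected hvw.adj_sub
  have heq := hmax (K ⊔ Γ.subgraphOfAdj hvw.adj_sub) le_sup_left
    (sup_le hle (SimpleGraph.subgraphOfAdj_le_of_adj H hvw))
    (SimpleGraph.Subgraph.connected_sup hc.preconnected hE.preconnected ⟨v, hv, by simp⟩)
  rw [← heq]
  exact Or.inr (by simp)

lemma IsComponentOf.minDegTwo {Γ : SimpleGraph V} {K H : Γ.Subgraph} (hK : IsComponentOf K H)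
    (hH : MinDegTwo H) : MinDegTwo K := fun v hv =>
  (hH v (hK.1.1 hv)).trans <|
    Set.ncard_le_ncard (fun _ hw => hK.adj hv hw) (Set.toFinite _)

/-- If `Γ₁` is a standard subgraph of a finite connected simple graph
`Γ`, then every cycle subgraph contained in `Γ₁` is standard, and every connected component
of `Γ₁^⊥` is standard. -/
theorem cycles_in_standard_and_components_of_orth_standard
    (V : Type) [Fintype V] [DecidableEq V] (Γ : SimpleGraph V) (hconn : Γ.Connected)
    (Γ₁ : Γ.Subgraph) (h₁ : IsStandard Γ₁) :
    (∀ C : Γ.Subgraph, IsCycleSubgraph C → C ≤ Γ₁ → IsStandard C) ∧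
    (∀ K : Γ.Subgraph, IsComponentOf K (orth Γ₁) → IsStandard K) := by
  obtain ⟨hc₁, he₁, hl₁, ho₁⟩ := h₁
  have hthick : MinDegTwo (orth Γ₁) := minDegTwo_prune _
  refine ⟨fun C hC hle => ⟨hC.2.1, hC.1, fun v hv => ?_, ?_⟩, fun K hK => ?_⟩
  · rw [hC.2.2 v hv]
    norm_num
  · exact edgeSet_nonempty_mono (hthick.le_orth ((disjoint_orth Γ₁).mono_left hle.1)) ho₁
  · have hKt : MinDegTwo K := hK.minDegTwo hthick
    refine ⟨hK.2.1, hKt.edgeSet_nonempty hK.2.1.nonempty, hKt.isLeafless, ?_⟩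
    exact edgeSet_nonempty_mono ((minDegTwo_of_connected hc₁ he₁ hl₁).le_orth
      ((disjoint_orth Γ₁).symm.mono_left hK.1.1)) he₁

end GraphBraid
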